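/- For every maximal cap S in AG(4,3), the point a = −∑_{x∈S} x does not lie in S, and for every x ∈ S the point −(a + x) lies in S and is different from x (so S consists of 10 pairs of points each of which forms a line with a). Moreover a is the unique point of AG(4,3) with this property; it is called the anchor of S. -/

import Mathlib

/-- A cap in `AG(n,3)`: a finite set of points of `Fin n → ZMod 3` containing no
three distinct collinear points (three distinct points are collinear iff they sum to zero). -/
def IsCap {n : ℕ} (C : Finset (Fin n → ZMod 3)) : Prop :=
  ∀ x ∈ C, ∀ y ∈ C, ∀ z ∈ C, x ≠ y → x ≠ z → y ≠ z → x + y + z ≠ 0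

/-- A maximal cap: a cap of largest possible size. -/
def MaximalCap {n : ℕ} (C : Finset (Fin n → ZMod 3)) : Prop :=
  IsCap C ∧ ∀ D : Finset (Fin n → ZMod 3), IsCap D → D.card ≤ C.card

open Finset Module

/-!
A nonzero functional on `𝔽₃⁴` cuts a set of points into three parallel hyperplane sections. The
sections of a cap have at most nine points, and counting the functionals that are constant on the
pairs and on the triples of a hyperplane section shows how planes can cut it. Comparing plane
sections in three parallel hyperplanes excludes for a cap of `20` points the section sizes `9 8 3`,
`9 7 4`, `9 6 5` and `8 7 5`, so every functional has two sections of equal size.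

On the anchor `a` a functional takes the value belonging to the remaining section, since it takes
that value on `-∑ x ∈ S, x`. So `x ↦ -(a + x)` preserves the size of the section through `x`, for
each functional. These sizes determine whether `x ∈ S`: their sum over all functionals is larger for
the points of `S`. Hence the reflection maps `S` to itself.

A cap of `21` points would have all its sections of size `7`, so these would not tell its points
from the others.
-/

namespace AffineCap

section Levels

variable {K V : Type*} [Field K] [AddCommGroup V] [Module K V]

theorem sub_smul_ne_zero_of_notMem_span {f g : V} (hg : g ∉ Submodule.span K {f}) (α : K) :
    g - α • f ≠ 0 :=
  fun h ↦ hg (Submodule.mem_span_singleton.2 ⟨α, (sub_eq_zero.1 h).symm⟩)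

theorem notMem_span_sub_smul {f g : V} (hf : f ≠ 0) (hg : g ∉ Submodule.span K {f})
    (α : K) : f ∉ Submodule.span K {g - α • f} := by
  intro h
  obtain ⟨c, hc⟩ := Submodule.mem_span_singleton.1 h
  have hc0 : c ≠ 0 := by
    rintro rfl
    exact hf (by rw [← hc, zero_smul])
  refine hg (Submodule.mem_span_singleton.2 ⟨c⁻¹ + α, ?_⟩)
  rw [add_smul, ← eq_sub_iff_add_eq, inv_smul_eq_iff₀ hc0, hc]

/-- The functionals that are constant on `A`: their common level sets are the flats parallel to the
affine span of `A`. -/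
def constantOn (K : Type*) {V : Type*} [Field K] [AddCommGroup V] [Module K V] (A : Finset V) :
    Submodule K (Dual K V) :=
  (vectorSpan K (A : Set V)).dualAnnihilator

theorem mem_constantOn {A : Finset V} {f : Dual K V} :
    f ∈ constantOn K A ↔ ∀ x ∈ A, ∀ y ∈ A, f x = f y := by
  rw [constantOn, vectorSpan_def, ← SetLike.mem_coe, Submodule.coe_dualAnnihilator_span]
  constructor
  · intro h x hx y hy
    simpa [sub_eq_zero] using h (Set.vsub_mem_vsub hx hy)
  · rintro h _ ⟨x, hx, y, hy, rfl⟩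
    simp [h x hx y hy]

theorem constantOn_anti {A B : Finset V} (h : A ⊆ B) : constantOn K B ≤ constantOn K A :=
  fun _ hf ↦ mem_constantOn.2 fun x hx y hy ↦ mem_constantOn.1 hf x (h hx) y (h hy)

theorem finrank_constantOn_add_card [FiniteDimensional K V] {s : Finset V} (hs : s.Nonempty)
    (hind : AffineIndependent K ((↑) : s → V)) :
    finrank K (constantOn K s) + #s = finrank K V + 1 := by
  have hspan : finrank K (vectorSpan K (s : Set V)) = #s - 1 := by
    have := hind.finrank_vectorSpan (n := #s - 1) (by simp [Nat.sub_add_cancel hs.card_pos])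
    rwa [Subtype.range_coe_subtype] at this
  have hadd := Subspace.finrank_add_finrank_dualAnnihilator_eq (vectorSpan K (s : Set V))
  have := hs.card_pos
  rw [constantOn]
  lia

theorem affineIndependent_coe_pair [DecidableEq V] {x y : V} (hxy : x ≠ y) :
    AffineIndependent K ((↑) : ({x, y} : Finset V) → V) :=
  (affineIndependent_of_ne K hxy).range.mono (by simp [Set.pair_comm])

section Outside

variable [Fintype K] [FiniteDimensional K V]

noncomputable instance : Fintype (Dual K V) :=
  have := finite_of_finite K (M := Dual K V)
  Fintype.ofFinite _

open scoped Classical in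
/-- The functionals not in `W`. When `W` consists of functionals constant on `A`, these cut `A` into
proper sections. -/
noncomputable def outside (W : Submodule K (Dual K V)) : Finset (Dual K V) :=
  {g | g ∉ W}

theorem mem_outside {W : Submodule K (Dual K V)} {g : Dual K V} : g ∈ outside W ↔ g ∉ W := by
  simp [outside]

open scoped Classical in
theorem card_filter_mem (W : Submodule K (Dual K V)) :
    #{g | g ∈ W} = Fintype.card K ^ finrank K W := by
  rw [← card_eq_pow_finrank (V := W), Fintype.card_subtype]

theorem card_outside {W : Submodule K (Dual K V)} {e : ℕ} (hdim : finrank K W + e = finrank K V) :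
    #(outside W) = (Fintype.card K ^ e - 1) * Fintype.card K ^ finrank K W := by
  classical
  have hadd := card_filter_add_card_filter_not (s := (univ : Finset (Dual K V))) (· ∈ W)
  rw [card_filter_mem, card_univ, card_eq_pow_finrank (K := K) (V := Dual K V),
    Subspace.dual_finrank_eq, ← hdim, pow_add, mul_comm (_ ^ finrank K W)] at hadd
  rw [Nat.sub_mul, one_mul, ← hadd, Nat.add_sub_cancel_left, outside]

end Outside

variable [DecidableEq K]

/-- The hyperplane section of the point set `A` on which the functional `f` takes the value `k`. -/
def level (A : Finset V) (f : Dual K V) (k : K) : Finset V := {x ∈ A | f x = k}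

theorem mem_level {A : Finset V} {f : Dual K V} {k : K} {x : V} :
    x ∈ level A f k ↔ x ∈ A ∧ f x = k :=
  mem_filter

theorem level_subset (A : Finset V) (f : Dual K V) (k : K) : level A f k ⊆ A :=
  filter_subset _ _

theorem mem_constantOn_level (A : Finset V) (f : Dual K V) (k : K) :
    f ∈ constantOn K (level A f k) :=
  mem_constantOn.2 fun _ hx _ hy ↦ (mem_level.1 hx).2.trans (mem_level.1 hy).2.symm

theorem span_le_constantOn_level (A : Finset V) (f : Dual K V) (k : K) :
    Submodule.span K {f} ≤ constantOn K (level A f k) :=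
  (Submodule.span_singleton_le_iff_mem _ _).2 (mem_constantOn_level A f k)

theorem finrank_lt_finrank_constantOn_level [FiniteDimensional K V] {A : Finset V}
    {W : Submodule K (Dual K V)} (hW : W ≤ constantOn K A) {g : Dual K V} (hg : g ∉ W) (k : K) :
    finrank K W < finrank K (constantOn K (level A g k)) :=
  Submodule.finrank_lt_finrank_of_lt <|
    lt_of_le_of_ne (hW.trans (constantOn_anti (level_subset A g k))) fun h ↦
      hg (h ▸ mem_constantOn_level A g k)

theorem card_level_erase [DecidableEq V] {A : Finset V} {x : V} (hx : x ∈ A) (f : Dual K V)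
    (k : K) : #(level (A.erase x) f k) = #(level A f k) - if f x = k then 1 else 0 := by
  rw [level, filter_erase, card_erase_eq_ite]
  split_ifs <;> simp_all [level]

theorem level_level_sub_smul (A : Finset V) (f g : Dual K V) (α β k : K) :
    level (level A (g - α • f) β) f k = level (level A f k) g (β + α * k) := by
  ext x
  simp only [mem_level, LinearMap.sub_apply, LinearMap.smul_apply, smul_eq_mul, sub_eq_iff_eq_add]
  constructor
  · rintro ⟨⟨hx, hg⟩, rfl⟩
    exact ⟨⟨hx, rfl⟩, hg⟩
  · rintro ⟨⟨hx, rfl⟩, hg⟩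
    exact ⟨⟨hx, hg⟩, rfl⟩

variable [Fintype K]

theorem sum_card_level (A : Finset V) (f : Dual K V) : ∑ k, #(level A f k) = #A :=
  (card_eq_sum_card_fiberwise fun _ _ ↦ mem_univ _).symm

theorem apply_sum_eq_sum_card_level (A : Finset V) (f : Dual K V) :
    f (∑ x ∈ A, x) = ∑ k, #(level A f k) • k := by
  rw [map_sum, ← sum_fiberwise A f]
  refine sum_congr rfl fun k _ ↦ ?_
  rw [← sum_const]
  exact sum_congr rfl fun x hx ↦ (mem_level.1 hx).2

open scoped Classical in
theorem sum_choose_card_level (A : Finset V) (f : Dual K V) {j : ℕ} (hj : j ≠ 0) :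
    ∑ k, (#(level A f k)).choose j = #{s ∈ A.powersetCard j | f ∈ constantOn K s} := by
  have hunion : ({s ∈ A.powersetCard j | f ∈ constantOn K s} : Finset (Finset V)) =
      univ.biUnion fun k ↦ (level A f k).powersetCard j := by
    ext s
    simp only [mem_filter, mem_powersetCard, mem_biUnion, mem_univ, true_and, mem_constantOn]
    constructor
    · rintro ⟨⟨hsA, hcard⟩, hconst⟩
      obtain ⟨x, hx⟩ := card_ne_zero.1 (hcard.symm ▸ hj)
      exact ⟨f x, fun y hy ↦ mem_level.2 ⟨hsA hy, hconst y hy x hx⟩, hcard⟩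
    · rintro ⟨k, hs, hcard⟩
      exact ⟨⟨hs.trans (level_subset A f k), hcard⟩, fun x hx y hy ↦
        (mem_level.1 (hs hx)).2.trans (mem_level.1 (hs hy)).2.symm⟩
  have hdisj : ((univ : Finset K) : Set K).PairwiseDisjoint fun k ↦
      (level A f k).powersetCard j := by
    refine fun k _ l _ hkl ↦ disjoint_left.2 fun s hk hl ↦ hkl ?_
    rw [mem_powersetCard] at hk hl
    obtain ⟨x, hx⟩ := card_ne_zero.1 (hk.2.symm ▸ hj)
    exact (mem_level.1 (hk.1 hx)).2.symm.trans (mem_level.1 (hl.1 hx)).2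
  rw [hunion, card_biUnion hdisj]
  simp only [card_powersetCard]

variable [FiniteDimensional K V]

/-- Double counting of the pairs `(g, s)` where `s` is a `j`-subset of `A` on which `g` is
constant. -/
theorem sum_outside_choose {A : Finset V} {W : Submodule K (Dual K V)} (hW : W ≤ constantOn K A)
    {e j : ℕ} (hdim : finrank K W + e = finrank K V) (hj : j ≠ 0) (hje : j ≤ e + 1)
    (hind : ∀ s ∈ A.powersetCard j, AffineIndependent K ((↑) : s → V)) :
    ∑ g ∈ outside W, ∑ k, (#(level A g k)).choose j =
      (#A).choose j * (Fintype.card K ^ (e + 1 - j) - 1) * Fintype.card K ^ finrank K W := by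
  classical
  have hall : ∑ g : Dual K V, ∑ k, (#(level A g k)).choose j =
      (#A).choose j * Fintype.card K ^ (finrank K V + 1 - j) := by
    calc ∑ g : Dual K V, ∑ k, (#(level A g k)).choose j
        = ∑ s ∈ A.powersetCard j, #{g : Dual K V | g ∈ constantOn K s} := by
          simp only [sum_choose_card_level A _ hj]
          exact sum_card_bipartiteAbove_eq_sum_card_bipartiteBelow fun g s ↦ g ∈ constantOn K s
      _ = ∑ _s ∈ A.powersetCard j, Fintype.card K ^ (finrank K V + 1 - j) := by
          refine sum_congr rfl fun s hs ↦ ?_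
          have hcard := (mem_powersetCard.1 hs).2
          have hne : s.Nonempty := card_ne_zero.1 (hcard.symm ▸ hj)
          rw [card_filter_mem, ← finrank_constantOn_add_card hne (hind s hs), hcard,
            Nat.add_sub_cancel]
      _ = (#A).choose j * Fintype.card K ^ (finrank K V + 1 - j) := by
          rw [sum_const, card_powersetCard, smul_eq_mul]
  have hconst : ∑ g : Dual K V with g ∈ W, ∑ k, (#(level A g k)).choose j =
      (#A).choose j * Fintype.card K ^ finrank K W := by
    rw [← card_filter_mem, mul_comm, ← smul_eq_mul, ← sum_const]
    refine sum_congr rfl fun g hg ↦ ?_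
    rw [sum_choose_card_level A g hj, ← card_powersetCard, filter_true_of_mem]
    exact fun s hs ↦ constantOn_anti (mem_powersetCard.1 hs).1 (hW (mem_filter.1 hg).2)
  have hadd := sum_filter_add_sum_filter_not univ (· ∈ W) fun g ↦ ∑ k, (#(level A g k)).choose j
  rw [hconst, hall, ← hdim, Nat.add_assoc, Nat.add_sub_assoc hje, pow_add,
    mul_comm (_ ^ finrank K W)] at hadd
  rw [mul_assoc, Nat.sub_mul, one_mul, Nat.mul_sub, ← hadd, Nat.add_sub_cancel_left, outside]

theorem sum_card_level_apply [DecidableEq V] (A : Finset V) (x : V) :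
    ∑ f : Dual K V, #(level A f (f x)) =
      #(A.erase x) * Fintype.card K ^ (finrank K V - 1) +
        if x ∈ A then Fintype.card K ^ finrank K V else 0 := by
  classical
  have hpair : ∀ y ∈ A.erase x, #{f : Dual K V | f y = f x} =
      Fintype.card K ^ (finrank K V - 1) := by
    intro y hy
    have hyx := ne_of_mem_erase hy
    have hrank := finrank_constantOn_add_card (insert_nonempty y {x})
      (affineIndependent_coe_pair (K := K) hyx)
    rw [card_pair hyx] at hrank
    rw [show finrank K V - 1 = finrank K (constantOn K {y, x}) by lia, ← card_filter_mem]
    congr 1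
    ext f
    simp only [mem_filter, mem_univ, true_and, mem_constantOn, mem_insert, mem_singleton,
      forall_eq_or_imp, forall_eq]
    grind
  have hself : #{f : Dual K V | f x = f x} = Fintype.card K ^ finrank K V := by
    rw [filter_true_of_mem fun _ _ ↦ rfl, card_univ, card_eq_pow_finrank (K := K),
      Subspace.dual_finrank_eq]
  calc ∑ f : Dual K V, #(level A f (f x))
      = ∑ y ∈ A, #{f : Dual K V | f y = f x} :=
        sum_card_bipartiteAbove_eq_sum_card_bipartiteBelow fun (f : Dual K V) y ↦ f y = f x
    _ = ∑ y ∈ A.erase x, #{f : Dual K V | f y = f x} +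
          if x ∈ A then Fintype.card K ^ finrank K V else 0 := by
        split_ifs with hx
        · rw [← sum_erase_add _ _ hx, hself]
        · rw [erase_eq_of_notMem hx, add_zero]
    _ = _ := by rw [sum_congr rfl hpair, sum_const, smul_eq_mul]

theorem mem_of_forall_card_level_eq {A : Finset V} {x y : V}
    (h : ∀ f : Dual K V, #(level A f (f x)) = #(level A f (f y))) (hx : x ∈ A) : y ∈ A := by
  classical
  by_contra hy
  have hsum := sum_congr (rfl : (univ : Finset (Dual K V)) = univ) fun f _ ↦ h f
  rw [sum_card_level_apply, sum_card_level_apply, if_pos hx, if_neg hy, erase_eq_of_notMem hy,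
    ← card_erase_add_one hx, add_mul, one_mul, add_zero, Nat.add_left_cancel_iff] at hsum
  have : Nontrivial V := ⟨x, y, fun hxy ↦ hy (hxy ▸ hx)⟩
  have hn : 0 < finrank K V := finrank_pos
  have := Nat.pow_right_injective Fintype.one_lt_card hsum
  lia

end Levels

/-- Turns a statement about bounded functions into one about a finite type, where it is
decidable. -/
theorem forall_bounded_iff {ι : Type*} {m : ℕ} {p : (ι → ℕ) → Prop} :
    (∀ r, (∀ k, r k ≤ m) → p r) ↔ ∀ r : ι → Fin (m + 1), p fun k ↦ r k :=
  ⟨fun h r ↦ h _ fun k ↦ Nat.le_of_lt_succ (r k).2,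
    fun h r hr ↦ h fun k ↦ ⟨r k, Nat.lt_succ_of_le (hr k)⟩⟩

section TernarySpace

theorem sum_zmod_three_eq {M : Type*} [AddCommMonoid M] {i j : ZMod 3} (hij : i ≠ j)
    (r : ZMod 3 → M) : ∑ k, r k = r i + r j + r (-(i + j)) := by
  have huniv : ∀ i j : ZMod 3, i ≠ j → univ = {i, j, -(i + j)} := by decide
  rw [huniv i j hij, sum_insert (by decide +revert), sum_pair (by decide +revert), add_assoc]

theorem exists_line_through {i j : ZMod 3} (hij : i ≠ j) (p q : ZMod 3) :
    ∃ α β : ZMod 3, β + α * i = p ∧ β + α * j = q ∧ β + α * -(i + j) = -(p + q) := by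
  decide +revert

variable {V : Type*} [AddCommGroup V] [Module (ZMod 3) V]

theorem card_level_add_card_level_add_card_level (A : Finset V) (f : Dual (ZMod 3) V)
    {i j : ZMod 3} (hij : i ≠ j) :
    #(level A f i) + #(level A f j) + #(level A f (-(i + j))) = #A := by
  rw [← sum_zmod_three_eq hij fun k ↦ #(level A f k), sum_card_level]

theorem card_level_sub_smul (A : Finset V) (f g : Dual (ZMod 3) V) {i j : ZMod 3} (hij : i ≠ j)
    (α β : ZMod 3) :
    #(level A (g - α • f) β) = #(level (level A f i) g (β + α * i)) +
      #(level (level A f j) g (β + α * j)) +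
      #(level (level A f (-(i + j))) g (β + α * -(i + j))) := by
  rw [← card_level_add_card_level_add_card_level _ f hij]
  simp only [level_level_sub_smul]

theorem exists_card_level_eq_sum_diagonal (A : Finset V) {f g : Dual (ZMod 3) V}
    (hg : g ∉ Submodule.span (ZMod 3) {f}) {i j : ZMod 3} (hij : i ≠ j) (d : ZMod 3) :
    ∃ h : Dual (ZMod 3) V, h ≠ 0 ∧ ∃ β, ∀ t, #(level A h (β + t)) =
      #(level (level A f i) g t) + #(level (level A f j) g (d + t)) +
        #(level (level A f (-(i + j))) g (-d + t)) := by
  obtain ⟨α, β, hi, hj, hk⟩ := exists_line_through hij 0 d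
  refine ⟨g - α • f, sub_smul_ne_zero_of_notMem_span hg α, β, fun t ↦ ?_⟩
  simp only [card_level_sub_smul A f g hij, add_right_comm β t, hi, hj, hk, zero_add]

end TernarySpace

/-- The constraints on the plane sections of a cap in `AG(4,3)`. The functions `a`, `b`, `c` list
the sizes of the sections by `g` of three parallel hyperplane sections, as the rows of a `3 × 3`
grid. A transversal line `p + q + r = 0` of the grid is again a hyperplane section: it has at most
nine points, and if it has nine, then none of its plane sections has two. -/
def IsCapGrid (a b c : ZMod 3 → ℕ) : Prop :=
  ∀ p q, a p + b q + c (-(p + q)) ≤ 9 ∧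
    (a p + b q + c (-(p + q)) = 9 → a p ≠ 2 ∧ b q ≠ 2 ∧ c (-(p + q)) ≠ 2)

instance (a b c : ZMod 3 → ℕ) : Decidable (IsCapGrid a b c) :=
  inferInstanceAs (Decidable (∀ _ _, _))

theorem not_isCapGrid_eight_seven : ∀ a : ZMod 3 → ℕ, (∀ k, a k ≤ 4) → ∑ k, a k = 8 →
    (∃ k, a k = 0) → ∀ b : ZMod 3 → ℕ, (∀ k, b k ≤ 4) → ∑ k, b k = 7 →
    ∀ c : ZMod 3 → ℕ, (∀ k, c k ≤ 4) → ∑ k, c k = 5 → ¬IsCapGrid a b c := by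
  simp only [forall_bounded_iff]
  decide +kernel

theorem not_isCapGrid_seven_nine : ∀ a : ZMod 3 → ℕ, (∀ k, a k ≤ 4) → ∑ k, a k = 7 →
    (∃ k, a k = 0) → ∀ b : ZMod 3 → ℕ, (∀ k, b k ≤ 4) → ∑ k, b k = 9 → (∀ k, b k ≠ 2) →
    ∀ c : ZMod 3 → ℕ, (∀ k, c k ≤ 4) → ∑ k, c k = 4 → ¬IsCapGrid a b c := by
  simp only [forall_bounded_iff]
  decide +kernel

theorem exists_lines_of_isCapGrid_nine_six : ∀ a : ZMod 3 → ℕ, (∀ k, a k ≤ 4) → ∑ k, a k = 9 →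
    (∃ k, a k = 1) → ∀ b : ZMod 3 → ℕ, (∀ k, b k ≤ 4) → ∑ k, b k = 6 → (∀ k, b k ≠ 4) →
    ∀ c : ZMod 3 → ℕ, (∀ k, c k ≤ 4) → ∑ k, c k = 5 → IsCapGrid a b c →
    ∃ d s t, a s + b (d + s) + c (-d + s) = 8 ∧ a t + b (d + t) + c (-d + t) = 7 := by
  simp only [forall_bounded_iff]
  decide +kernel

theorem exists_lines_of_isCapGrid_nine_eight : ∀ a : ZMod 3 → ℕ, (∀ k, a k ≤ 4) → ∑ k, a k = 9 →
    (∀ k, a k ≠ 2) → ∀ b : ZMod 3 → ℕ, (∀ k, b k ≤ 4) → ∑ k, b k = 8 →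
    ∀ c : ZMod 3 → ℕ, (∀ k, c k ≤ 4) → ∑ k, c k = 3 → (∃ k, c k = 3) → IsCapGrid a b c →
    ∃ d s t, a s + b (d + s) + c (-d + s) = 9 ∧ a t + b (d + t) + c (-d + t) = 6 := by
  simp only [forall_bounded_iff]
  decide +kernel

section Anchor

variable {V : Type*} [AddCommGroup V]

/-- The point `-∑ x ∈ A, x`, which is the anchor of `A` when `A` is a maximal cap of `AG(4,3)`. -/
def anchor (A : Finset V) : V := -∑ x ∈ A, x

/-- The third point of the line through `a` and `x` in an affine space over `ZMod 3`; it is `x`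
itself when `a = x`. -/
def thirdPoint (a x : V) : V := -(a + x)

variable [Module (ZMod 3) V]

theorem thirdPoint_eq_right_iff {a x : V} : thirdPoint a x = x ↔ x = a := by
  have hthree : (3 : ZMod 3) = 0 := rfl
  unfold thirdPoint
  constructor <;> intro h
  · linear_combination (norm := module) h + hthree • x
  · linear_combination (norm := module) h - hthree • x

theorem eq_anchor_of_forall_thirdPoint_mem {A : Finset V} (hA : (#A : ZMod 3) = 2) {b : V}
    (hb : ∀ x ∈ A, thirdPoint b x ∈ A) : b = anchor A := by
  have hinvol (x : V) : thirdPoint b (thirdPoint b x) = x := by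
    unfold thirdPoint
    abel
  have hsum : ∑ x ∈ A, -(b + x) = ∑ x ∈ A, x :=
    sum_nbij' (thirdPoint b) (thirdPoint b) hb hb (fun x _ ↦ hinvol x) (fun x _ ↦ hinvol x)
      fun _ _ ↦ rfl
  rw [sum_neg_distrib, sum_add_distrib, sum_const, ← Nat.cast_smul_eq_nsmul (ZMod 3), hA] at hsum
  have hthree : (3 : ZMod 3) = 0 := rfl
  unfold anchor
  linear_combination (norm := module) hsum + hthree • (b + ∑ x ∈ A, x)

theorem apply_anchor {A : Finset V} (hA : (#A : ZMod 3) = 2) {f : Dual (ZMod 3) V} {i j : ZMod 3}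
    (hij : i ≠ j) (heq : #(level A f i) = #(level A f j)) : f (anchor A) = -(i + j) := by
  have hsum := congrArg (Nat.cast : ℕ → ZMod 3)
    (card_level_add_card_level_add_card_level A f hij)
  rw [← heq, hA] at hsum
  push_cast at hsum
  have hthree : (3 : ZMod 3) = 0 := rfl
  rw [anchor, map_neg, apply_sum_eq_sum_card_level, sum_zmod_three_eq hij, ← heq]
  simp only [nsmul_eq_mul]
  linear_combination (i + j) * hsum + (1 - #(level A f i)) * (i + j) * hthree

theorem card_level_thirdPoint_anchor {A : Finset V} (hA : (#A : ZMod 3) = 2) {f : Dual (ZMod 3) V}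
    {i j : ZMod 3} (hij : i ≠ j) (heq : #(level A f i) = #(level A f j)) (x : V) :
    #(level A f (f (thirdPoint (anchor A) x))) = #(level A f (f x)) := by
  have hcases : ∀ i j : ZMod 3, i ≠ j → ∀ k, k = i ∨ k = j ∨ k = -(i + j) := by decide
  have hfix : ∀ l : ZMod 3, -(l + l) = l := by decide
  rw [thirdPoint, map_neg, map_add, apply_anchor hA hij heq]
  obtain hx | hx | hx := hcases i j hij (f x)
  · rw [hx, heq, neg_add, neg_neg, add_neg_cancel_comm]
  · rw [hx, ← heq, neg_add, neg_neg, add_neg_cancel_right]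
  · rw [hx, hfix]

end Anchor

section Caps

variable {n : ℕ} {A B : Finset (Fin n → ZMod 3)}

theorem _root_.IsCap.mono (hB : IsCap B) (h : A ⊆ B) : IsCap A :=
  fun x hx y hy z hz ↦ hB x (h hx) y (h hy) z (h hz)

theorem not_collinear_of_add_ne_zero {x y z : Fin n → ZMod 3} (hxy : x ≠ y) (hxz : x ≠ z)
    (hyz : y ≠ z) (h : x + y + z ≠ 0) : ¬Collinear (ZMod 3) {x, y, z} := by
  intro hcol
  obtain ⟨v, hv⟩ := (collinear_iff_of_mem (p₀ := x) (by simp)).1 hcol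
  obtain ⟨r, rfl⟩ := hv y (by simp)
  obtain ⟨s, rfl⟩ := hv z (by simp)
  have hr : r ≠ 0 := by rintro rfl; simp at hxy
  have hs : s ≠ 0 := by rintro rfl; simp at hxz
  have hrs : r ≠ s := by rintro rfl; exact hyz rfl
  have hsum : r + s = 0 :=
    (by decide : ∀ r s : ZMod 3, r ≠ 0 → s ≠ 0 → r ≠ s → r + s = 0) r s hr hs hrs
  apply h
  calc x + (r • v +ᵥ x) + (s • v +ᵥ x) = (3 : ZMod 3) • x + (r + s) • v := by
        simp only [vadd_eq_add]; module
    _ = 0 := by rw [hsum, show (3 : ZMod 3) = 0 from rfl, zero_smul, zero_smul, add_zero]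

theorem _root_.IsCap.affineIndependent_of_card_eq_three (hA : IsCap A) (hcard : #A = 3) :
    AffineIndependent (ZMod 3) ((↑) : A → Fin n → ZMod 3) := by
  obtain ⟨x, y, z, hxy, hxz, hyz, rfl⟩ := card_eq_three.1 hcard
  have hsum := hA x (by simp) y (by simp) z (by simp) hxy hxz hyz
  have := affineIndependent_iff_not_collinear_set.2 (not_collinear_of_add_ne_zero hxy hxz hyz hsum)
  exact this.range.mono (by intro p; simp [or_left_comm, or_comm])

theorem sum_outside_choose_two {W : Submodule (ZMod 3) (Dual (ZMod 3) (Fin n → ZMod 3))}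
    (hW : W ≤ constantOn (ZMod 3) A) {e : ℕ} (hdim : finrank (ZMod 3) W + (e + 1) = n) :
    ∑ g ∈ outside W, ∑ k, (#(level A g k)).choose 2 =
      (#A).choose 2 * (3 ^ e - 1) * 3 ^ finrank (ZMod 3) W :=
  sum_outside_choose hW (by simpa using hdim) two_ne_zero (by lia) fun _ hs ↦ by
    obtain ⟨x, y, hxy, rfl⟩ := card_eq_two.1 (mem_powersetCard.1 hs).2
    exact affineIndependent_coe_pair hxy

theorem _root_.IsCap.sum_outside_choose_three (hA : IsCap A)
    {W : Submodule (ZMod 3) (Dual (ZMod 3) (Fin n → ZMod 3))}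
    (hW : W ≤ constantOn (ZMod 3) A) {e : ℕ} (hdim : finrank (ZMod 3) W + (e + 2) = n) :
    ∑ g ∈ outside W, ∑ k, (#(level A g k)).choose 3 =
      (#A).choose 3 * (3 ^ e - 1) * 3 ^ finrank (ZMod 3) W :=
  sum_outside_choose hW (by simpa using hdim) three_ne_zero (by lia) fun _ hs ↦
    (hA.mono (mem_powersetCard.1 hs).1).affineIndependent_of_card_eq_three
      (mem_powersetCard.1 hs).2

theorem _root_.IsCap.isCap_level (hA : IsCap A) (f : Dual (ZMod 3) (Fin n → ZMod 3)) (k : ZMod 3) :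
    IsCap (level A f k) :=
  hA.mono (level_subset A f k)

theorem choose_two_mul_le_of_forall_sum_choose_le {e c : ℕ}
    (hdim : finrank (ZMod 3) (constantOn (ZMod 3) A) + (e + 1) = n)
    (hc : ∀ g ∉ constantOn (ZMod 3) A, ∑ k, (#(level A g k)).choose 2 ≤ c) :
    (#A).choose 2 * (3 ^ e - 1) ≤ (3 ^ (e + 1) - 1) * c := by
  have hle := sum_le_card_nsmul (outside (constantOn (ZMod 3) A)) _ c
    fun g hg ↦ hc g (mem_outside.1 hg)
  rw [sum_outside_choose_two le_rfl hdim, card_outside (by simpa using hdim), ZMod.card,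
    smul_eq_mul, mul_right_comm (3 ^ (e + 1) - 1)] at hle
  exact Nat.le_of_mul_le_mul_right hle (pow_pos three_pos _)

theorem _root_.IsCap.card_le_two (hA : IsCap A)
    (hdim : n ≤ finrank (ZMod 3) (constantOn (ZMod 3) A) + 1) : #A ≤ 2 := by
  by_contra! hcard
  obtain ⟨s, hsA, hs⟩ := exists_subset_card_eq hcard
  have hrank := finrank_constantOn_add_card (card_pos.1 (by lia))
    ((hA.mono hsA).affineIndependent_of_card_eq_three hs)
  have := Submodule.finrank_mono (constantOn_anti (K := ZMod 3) hsA)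
  rw [hs, finrank_fin_fun] at hrank
  lia

theorem sum_choose_two_le_two_of_sum_eq_five : ∀ r : ZMod 3 → ℕ, (∀ k, r k ≤ 2) → ∑ k, r k = 5 →
    ∑ k, (r k).choose 2 ≤ 2 := by
  rw [forall_bounded_iff]
  decide +kernel

theorem sum_choose_two_le_thirteen_of_sum_eq_ten : ∀ r : ZMod 3 → ℕ, (∀ k, r k ≤ 4) →
    ∑ k, r k = 10 → ∑ k, (r k).choose 2 ≤ 13 := by
  rw [forall_bounded_iff]
  decide +kernel

theorem _root_.IsCap.card_le_four (hA : IsCap A)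
    (hdim : n ≤ finrank (ZMod 3) (constantOn (ZMod 3) A) + 2) : #A ≤ 4 := by
  by_contra! hcard
  obtain ⟨B, hBA, hB⟩ := exists_subset_card_eq hcard
  have hcap := hA.mono hBA
  have hmono := Submodule.finrank_mono (constantOn_anti (K := ZMod 3) hBA)
  have hdimB : finrank (ZMod 3) (constantOn (ZMod 3) B) + (1 + 1) = n := by
    by_contra hne
    have := hcap.card_le_two (by lia)
    lia
  have hpairs : ∀ g ∉ constantOn (ZMod 3) B, ∑ k, (#(level B g k)).choose 2 ≤ 2 := by
    intro g hg
    have hlevel (k : ZMod 3) : #(level B g k) ≤ 2 :=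
      (hcap.isCap_level g k).card_le_two <| by
        have := finrank_lt_finrank_constantOn_level le_rfl hg k
        lia
    exact sum_choose_two_le_two_of_sum_eq_five _ hlevel ((sum_card_level B g).trans hB)
  have := choose_two_mul_le_of_forall_sum_choose_le hdimB hpairs
  rw [hB] at this
  revert this
  decide

theorem _root_.IsCap.card_le_nine (hA : IsCap A)
    (hdim : n ≤ finrank (ZMod 3) (constantOn (ZMod 3) A) + 3) : #A ≤ 9 := by
  by_contra! hcard
  obtain ⟨B, hBA, hB⟩ := exists_subset_card_eq hcard
  have hcap := hA.mono hBA
  have hmono := Submodule.finrank_mono (constantOn_anti (K := ZMod 3) hBA)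
  have hdimB : finrank (ZMod 3) (constantOn (ZMod 3) B) + (2 + 1) = n := by
    by_contra hne
    have := hcap.card_le_four (by lia)
    lia
  have hpairs : ∀ g ∉ constantOn (ZMod 3) B, ∑ k, (#(level B g k)).choose 2 ≤ 13 := by
    intro g hg
    have hlevel (k : ZMod 3) : #(level B g k) ≤ 4 :=
      (hcap.isCap_level g k).card_le_four <| by
        have := finrank_lt_finrank_constantOn_level le_rfl hg k
        lia
    exact sum_choose_two_le_thirteen_of_sum_eq_ten _ hlevel ((sum_card_level B g).trans hB)
  have := choose_two_mul_le_of_forall_sum_choose_le hdimB hpairs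
  rw [hB] at this
  revert this
  decide

section Solid

variable {W : Submodule (ZMod 3) (Dual (ZMod 3) (Fin n → ZMod 3))}

theorem _root_.IsCap.card_level_le_four (hA : IsCap A) (hW : W ≤ constantOn (ZMod 3) A)
    (hdim : finrank (ZMod 3) W + 3 = n) {g : Dual (ZMod 3) (Fin n → ZMod 3)} (hg : g ∉ W)
    (k : ZMod 3) : #(level A g k) ≤ 4 :=
  (hA.isCap_level g k).card_le_four <| by
    have := finrank_lt_finrank_constantOn_level hW hg k
    lia

/-- Equality holds for the section sizes `4, 4, 1` and `3, 3, 3` only. -/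
theorem five_mul_sum_choose_two_le_of_sum_eq_nine : ∀ r : ZMod 3 → ℕ, (∀ k, r k ≤ 4) →
    ∑ k, r k = 9 → 5 * ∑ k, (r k).choose 2 ≤ 3 * ∑ k, (r k).choose 3 + 36 := by
  rw [forall_bounded_iff]
  decide +kernel

theorem sum_choose_two_eq_of_five_mul_eq : ∀ r : ZMod 3 → ℕ, (∀ k, r k ≤ 4) → ∑ k, r k = 9 →
    5 * ∑ k, (r k).choose 2 = 3 * ∑ k, (r k).choose 3 + 36 →
    (∀ k, r k ≠ 2) ∧ ∑ k, (r k).choose 2 = 9 + if ∃ k, r k = 1 then 3 else 0 := by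
  rw [forall_bounded_iff]
  decide +kernel

theorem _root_.IsCap.five_mul_sum_choose_two_eq (hA : IsCap A) (hW : W ≤ constantOn (ZMod 3) A)
    (hdim : finrank (ZMod 3) W + 3 = n) (hcard : #A = 9) {g : Dual (ZMod 3) (Fin n → ZMod 3)}
    (hg : g ∉ W) :
    5 * ∑ k, (#(level A g k)).choose 2 = 3 * ∑ k, (#(level A g k)).choose 3 + 36 := by
  have hle : ∀ g ∈ outside W, 5 * ∑ k, (#(level A g k)).choose 2 ≤
      3 * ∑ k, (#(level A g k)).choose 3 + 36 := fun g hg ↦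
    five_mul_sum_choose_two_le_of_sum_eq_nine _ (hA.card_level_le_four hW hdim (mem_outside.1 hg))
      ((sum_card_level A g).trans hcard)
  refine (sum_eq_sum_iff_of_le hle).1 ?_ g (mem_outside.2 hg)
  rw [← mul_sum, sum_add_distrib, ← mul_sum, sum_const, sum_outside_choose_two (e := 2) hW hdim,
    hA.sum_outside_choose_three (e := 1) hW hdim, card_outside (e := 3) (by simpa using hdim),
    ZMod.card, hcard, smul_eq_mul]
  norm_num [Nat.choose]
  ring

theorem _root_.IsCap.card_level_ne_two (hA : IsCap A) (hW : W ≤ constantOn (ZMod 3) A)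
    (hdim : finrank (ZMod 3) W + 3 = n) (hcard : #A = 9) {g : Dual (ZMod 3) (Fin n → ZMod 3)}
    (hg : g ∉ W) (k : ZMod 3) : #(level A g k) ≠ 2 :=
  (sum_choose_two_eq_of_five_mul_eq _ (hA.card_level_le_four hW hdim hg)
    ((sum_card_level A g).trans hcard) (hA.five_mul_sum_choose_two_eq hW hdim hcard hg)).1 k

theorem _root_.IsCap.card_filter_exists_level_eq_one (hA : IsCap A)
    (hW : W ≤ constantOn (ZMod 3) A) (hdim : finrank (ZMod 3) W + 3 = n) (hcard : #A = 9) :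
    #{g ∈ outside W | ∃ k, #(level A g k) = 1} = 18 * 3 ^ finrank (ZMod 3) W := by
  have hsum := sum_congr (rfl : outside W = outside W) fun g hg ↦
    (sum_choose_two_eq_of_five_mul_eq _ (hA.card_level_le_four hW hdim (mem_outside.1 hg))
      ((sum_card_level A g).trans hcard)
      (hA.five_mul_sum_choose_two_eq hW hdim hcard (mem_outside.1 hg))).2
  rw [sum_outside_choose_two (e := 2) hW hdim, sum_add_distrib, sum_const, ← sum_filter, sum_const,
    card_outside (e := 3) (by simpa using hdim), ZMod.card, hcard, smul_eq_mul, smul_eq_mul] at hsum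
  norm_num [Nat.choose] at hsum
  lia

/-- The numbers `8`, `2` and `26` are `3² - 1`, `3 - 1` and `3³ - 1`: modulo `W`, these count the
functionals outside `W` that are constant on a given pair, those constant on a given triple, and all
functionals outside `W`. -/
theorem _root_.IsCap.exists_level_eq_zero (hA : IsCap A) (hW : W ≤ constantOn (ZMod 3) A)
    (hdim : finrank (ZMod 3) W + 3 = n) {α β γ : ℕ}
    (hrow : ∀ r : ZMod 3 → ℕ, (∀ k, r k ≤ 4) → ∑ k, r k = #A → (∀ k, r k ≠ 0) →
      α * ∑ k, (r k).choose 2 ≤ β * ∑ k, (r k).choose 3 + γ)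
    (hlt : β * ((#A).choose 3 * 2) + 26 * γ < α * ((#A).choose 2 * 8)) :
    ∃ g ∉ W, ∃ k, #(level A g k) = 0 := by
  by_contra! hne
  have hle := sum_le_sum fun g hg ↦ hrow _ (hA.card_level_le_four hW hdim (mem_outside.1 hg))
    (sum_card_level A g) (hne g (mem_outside.1 hg))
  rw [← mul_sum, sum_add_distrib, ← mul_sum, sum_const, sum_outside_choose_two (e := 2) hW hdim,
    hA.sum_outside_choose_three (e := 1) hW hdim, card_outside (e := 3) (by simpa using hdim),
    ZMod.card, smul_eq_mul] at hle
  refine hle.not_gt ?_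
  calc _ = (β * ((#A).choose 3 * 2) + 26 * γ) * 3 ^ finrank (ZMod 3) W := by ring
    _ < α * ((#A).choose 2 * 8) * 3 ^ finrank (ZMod 3) W :=
      Nat.mul_lt_mul_of_pos_right hlt (by positivity)
    _ = _ := by ring

theorem _root_.IsCap.exists_level_eq_zero_of_card_eq_eight (hA : IsCap A)
    (hW : W ≤ constantOn (ZMod 3) A) (hdim : finrank (ZMod 3) W + 3 = n) (hcard : #A = 8) :
    ∃ g ∉ W, ∃ k, #(level A g k) = 0 :=
  hA.exists_level_eq_zero hW hdim (α := 3) (β := 2) (γ := 17)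
    (by rw [hcard, forall_bounded_iff]; decide +kernel) (by rw [hcard]; decide)

theorem _root_.IsCap.exists_level_eq_zero_of_card_eq_seven (hA : IsCap A)
    (hW : W ≤ constantOn (ZMod 3) A) (hdim : finrank (ZMod 3) W + 3 = n) (hcard : #A = 7) :
    ∃ g ∉ W, ∃ k, #(level A g k) = 0 :=
  hA.exists_level_eq_zero hW hdim (α := 2) (β := 1) (γ := 10)
    (by rw [hcard, forall_bounded_iff]; decide +kernel) (by rw [hcard]; decide)

theorem _root_.IsCap.card_filter_exists_level_eq_four_le (hA : IsCap A)
    (hW : W ≤ constantOn (ZMod 3) A) (hdim : finrank (ZMod 3) W + 3 = n) (hcard : #A = 6) :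
    #{g ∈ outside W | ∃ k, #(level A g k) = 4} ≤ 10 * 3 ^ finrank (ZMod 3) W := by
  have hfour : ∀ g ∈ ({g ∈ outside W | ∃ k, #(level A g k) = 4} : Finset _),
      4 ≤ ∑ k, (#(level A g k)).choose 3 := by
    intro g hg
    obtain ⟨k, hk⟩ := (mem_filter.1 hg).2
    calc 4 = (#(level A g k)).choose 3 := by rw [hk]; rfl
      _ ≤ _ := single_le_sum (f := fun k ↦ (#(level A g k)).choose 3) (fun _ _ ↦ Nat.zero_le _)
        (mem_univ k)
  have hle := (card_nsmul_le_sum _ _ 4 hfour).trans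
    (sum_le_sum_of_subset (filter_subset _ (outside W)))
  rw [hA.sum_outside_choose_three (e := 1) hW hdim, hcard, smul_eq_mul] at hle
  norm_num [Nat.choose] at hle
  lia

theorem _root_.IsCap.exists_level_eq_three (hA : IsCap A)
    (hW : W ≤ constantOn (ZMod 3) A) (hdim : finrank (ZMod 3) W + 3 = n) (hcard : #A = 3) :
    ∃ g ∉ W, ∃ k, #(level A g k) = 3 := by
  by_contra! hne
  have hzero : ∑ g ∈ outside W, ∑ k, (#(level A g k)).choose 3 = 0 := by
    refine sum_eq_zero fun g hg ↦ sum_eq_zero fun k _ ↦ Nat.choose_eq_zero_of_lt ?_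
    exact ((card_le_card (level_subset A g k)).trans_eq hcard).lt_of_ne (hne g (mem_outside.1 hg) k)
  rw [hA.sum_outside_choose_three (e := 1) hW hdim, hcard] at hzero
  simp at hzero

end Solid

section FourSpace

variable {S : Finset (Fin 4 → ZMod 3)} {f g : Dual (ZMod 3) (Fin 4 → ZMod 3)}

theorem finrank_span_add_three (hf : f ≠ 0) :
    finrank (ZMod 3) (Submodule.span (ZMod 3) {f}) + 3 = 4 := by
  rw [finrank_span_singleton hf]

theorem _root_.IsCap.card_level_le_nine (hS : IsCap S) (hf : f ≠ 0) (k : ZMod 3) :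
    #(level S f k) ≤ 9 :=
  (hS.isCap_level f k).card_le_nine <| by
    have := Submodule.finrank_mono (span_le_constantOn_level S f k)
    have := finrank_span_add_three hf
    lia

theorem _root_.IsCap.card_level_level_le_four (hS : IsCap S) (hf : f ≠ 0)
    (hg : g ∉ Submodule.span (ZMod 3) {f}) (i k : ZMod 3) :
    #(level (level S f i) g k) ≤ 4 :=
  (hS.isCap_level f i).card_level_le_four (span_le_constantOn_level S f i)
    (finrank_span_add_three hf) hg k

theorem _root_.IsCap.card_level_level_ne_two (hS : IsCap S) (hf : f ≠ 0)
    (hg : g ∉ Submodule.span (ZMod 3) {f}) {i : ZMod 3} (hi : #(level S f i) = 9)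
    (k : ZMod 3) : #(level (level S f i) g k) ≠ 2 :=
  (hS.isCap_level f i).card_level_ne_two (span_le_constantOn_level S f i)
    (finrank_span_add_three hf) hi hg k

theorem _root_.IsCap.isCapGrid (hS : IsCap S) (hf : f ≠ 0) (hg : g ∉ Submodule.span (ZMod 3) {f})
    {i j : ZMod 3} (hij : i ≠ j) :
    IsCapGrid (fun k ↦ #(level (level S f i) g k)) (fun k ↦ #(level (level S f j) g k))
      (fun k ↦ #(level (level S f (-(i + j))) g k)) := by
  intro p q
  obtain ⟨α, β, rfl, rfl, hk⟩ := exists_line_through hij p q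
  have hh := sub_smul_ne_zero_of_notMem_span hg α
  simp only [← hk, ← card_level_sub_smul S f g hij]
  refine ⟨hS.card_level_le_nine hh β, fun hnine ↦ ?_⟩
  simp only [← level_level_sub_smul]
  have := hS.card_level_level_ne_two hh (notMem_span_sub_smul hf hg α) hnine
  exact ⟨this i, this j, this _⟩

theorem _root_.IsCap.card_level_ne_seven_of_eq_eight (hS : IsCap S) (hcard : #S = 20) (hf : f ≠ 0)
    {i j : ZMod 3} (hi : #(level S f i) = 8) : #(level S f j) ≠ 7 := by
  intro hj
  have hij : i ≠ j := by
    rintro rfl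
    lia
  have hk : #(level S f (-(i + j))) = 5 := by
    have := card_level_add_card_level_add_card_level S f hij
    lia
  obtain ⟨g, hg, hzero⟩ := (hS.isCap_level f i).exists_level_eq_zero_of_card_eq_eight
    (span_le_constantOn_level S f i) (finrank_span_add_three hf) hi
  have hfour := hS.card_level_level_le_four hf hg
  exact not_isCapGrid_eight_seven _ (hfour i) ((sum_card_level _ g).trans hi) hzero
    _ (hfour j) ((sum_card_level _ g).trans hj) _ (hfour _) ((sum_card_level _ g).trans hk)
    (hS.isCapGrid hf hg hij)

theorem _root_.IsCap.card_level_ne_nine_of_eq_seven (hS : IsCap S) (hcard : #S = 20) (hf : f ≠ 0)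
    {i j : ZMod 3} (hi : #(level S f i) = 7) : #(level S f j) ≠ 9 := by
  intro hj
  have hij : i ≠ j := by
    rintro rfl
    lia
  have hk : #(level S f (-(i + j))) = 4 := by
    have := card_level_add_card_level_add_card_level S f hij
    lia
  obtain ⟨g, hg, hzero⟩ := (hS.isCap_level f i).exists_level_eq_zero_of_card_eq_seven
    (span_le_constantOn_level S f i) (finrank_span_add_three hf) hi
  have hfour := hS.card_level_level_le_four hf hg
  exact not_isCapGrid_seven_nine _ (hfour i) ((sum_card_level _ g).trans hi) hzero
    _ (hfour j) ((sum_card_level _ g).trans hj) (hS.card_level_level_ne_two hf hg hj)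
    _ (hfour _) ((sum_card_level _ g).trans hk) (hS.isCapGrid hf hg hij)

theorem _root_.IsCap.exists_card_level_eq_four_of_nine_six (hS : IsCap S) (hcard : #S = 20)
    (hf : f ≠ 0) (hg : g ∉ Submodule.span (ZMod 3) {f}) {i j : ZMod 3} (hij : i ≠ j)
    (hi : #(level S f i) = 9) (hj : #(level S f j) = 6)
    (hone : ∃ k, #(level (level S f i) g k) = 1) : ∃ k, #(level (level S f j) g k) = 4 := by
  by_contra! hne
  have hk : #(level S f (-(i + j))) = 5 := by
    have := card_level_add_card_level_add_card_level S f hij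
    lia
  have hfour := hS.card_level_level_le_four hf hg
  obtain ⟨d, s, t, hs, ht⟩ := exists_lines_of_isCapGrid_nine_six
    _ (hfour i) ((sum_card_level _ g).trans hi) hone _ (hfour j) ((sum_card_level _ g).trans hj) hne
    _ (hfour _) ((sum_card_level _ g).trans hk) (hS.isCapGrid hf hg hij)
  obtain ⟨h, hh, β, hβ⟩ := exists_card_level_eq_sum_diagonal S hg hij d
  exact hS.card_level_ne_seven_of_eq_eight hcard hh ((hβ s).trans hs) ((hβ t).trans ht)

theorem _root_.IsCap.card_level_ne_six_of_eq_nine (hS : IsCap S) (hcard : #S = 20) (hf : f ≠ 0)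
    {i j : ZMod 3} (hi : #(level S f i) = 9) : #(level S f j) ≠ 6 := by
  intro hj
  have hij : i ≠ j := by
    rintro rfl
    lia
  have hspan := span_le_constantOn_level S f
  have hsub : {g ∈ outside (Submodule.span (ZMod 3) {f}) | ∃ k, #(level (level S f i) g k) = 1} ⊆
      {g ∈ outside (Submodule.span (ZMod 3) {f}) | ∃ k, #(level (level S f j) g k) = 4} := by
    intro g hg
    obtain ⟨hout, hone⟩ := mem_filter.1 hg
    exact mem_filter.2
      ⟨hout, hS.exists_card_level_eq_four_of_nine_six hcard hf (mem_outside.1 hout) hij hi hj hone⟩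
  have hle := card_le_card hsub
  rw [(hS.isCap_level f i).card_filter_exists_level_eq_one (hspan i) (finrank_span_add_three hf) hi]
    at hle
  have := hle.trans ((hS.isCap_level f j).card_filter_exists_level_eq_four_le (hspan j)
    (finrank_span_add_three hf) hj)
  rw [finrank_span_singleton hf] at this
  lia

theorem _root_.IsCap.card_level_ne_eight_of_eq_nine (hS : IsCap S) (hcard : #S = 20) (hf : f ≠ 0)
    {i j : ZMod 3} (hi : #(level S f i) = 9) : #(level S f j) ≠ 8 := by
  intro hj
  have hij : i ≠ j := by
    rintro rfl
    lia
  have hk : #(level S f (-(i + j))) = 3 := by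
    have := card_level_add_card_level_add_card_level S f hij
    lia
  obtain ⟨g, hg, hthree⟩ := (hS.isCap_level f _).exists_level_eq_three
    (span_le_constantOn_level S f _) (finrank_span_add_three hf) hk
  have hfour := hS.card_level_level_le_four hf hg
  obtain ⟨d, s, t, hs, ht⟩ := exists_lines_of_isCapGrid_nine_eight
    _ (hfour i) ((sum_card_level _ g).trans hi) (hS.card_level_level_ne_two hf hg hi)
    _ (hfour j) ((sum_card_level _ g).trans hj)
    _ (hfour _) ((sum_card_level _ g).trans hk) hthree (hS.isCapGrid hf hg hij)
  obtain ⟨h, hh, β, hβ⟩ := exists_card_level_eq_sum_diagonal S hg hij d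
  exact hS.card_level_ne_six_of_eq_nine hcard hh ((hβ s).trans hs) ((hβ t).trans ht)

theorem _root_.IsCap.exists_card_level_eq (hS : IsCap S) (hcard : #S = 20) (hf : f ≠ 0) :
    ∃ i j, i ≠ j ∧ #(level S f i) = #(level S f j) := by
  by_contra! hne
  have hsum := card_level_add_card_level_add_card_level S f (i := 0) (j := 1) (by decide)
  have h01 := hne 0 1 (by decide)
  have h02 := hne 0 (-(0 + 1)) (by decide)
  have h12 := hne 1 (-(0 + 1)) (by decide)
  have hle := hS.card_level_le_nine hf
  have h87 := fun i j ↦ hS.card_level_ne_seven_of_eq_eight hcard hf (i := i) (j := j)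
  have h79 := fun i j ↦ hS.card_level_ne_nine_of_eq_seven hcard hf (i := i) (j := j)
  have h96 := fun i j ↦ hS.card_level_ne_six_of_eq_nine hcard hf (i := i) (j := j)
  have h98 := fun i j ↦ hS.card_level_ne_eight_of_eq_nine hcard hf (i := i) (j := j)
  have h0 := hle 0
  have h1 := hle 1
  have h2 := hle (-(0 + 1))
  grind

theorem _root_.IsCap.thirdPoint_anchor_mem (hS : IsCap S) (hcard : #S = 20) {x : Fin 4 → ZMod 3}
    (hx : x ∈ S) : thirdPoint (anchor S) x ∈ S := by
  refine mem_of_forall_card_level_eq (K := ZMod 3) (fun f ↦ ?_) hx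
  obtain rfl | hf := eq_or_ne f 0
  · rfl
  obtain ⟨i, j, hij, heq⟩ := hS.exists_card_level_eq hcard hf
  exact (card_level_thirdPoint_anchor (by rw [hcard]; rfl) hij heq x).symm

theorem _root_.IsCap.anchor_notMem (hS : IsCap S) (hcard : #S = 20) : anchor S ∉ S := by
  intro ha
  obtain ⟨x, hx, hxa⟩ := exists_mem_ne (by lia : 1 < #S) (anchor S)
  have hleft : anchor S ≠ thirdPoint (anchor S) x := fun h ↦
    hxa (thirdPoint_eq_right_iff.1 ((congrArg Neg.neg (add_comm _ _)).trans h.symm)).symm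
  have hright : x ≠ thirdPoint (anchor S) x := fun h ↦ hxa (thirdPoint_eq_right_iff.1 h.symm)
  exact hS _ ha x hx _ (hS.thirdPoint_anchor_mem hcard hx) hxa.symm hleft hright
    (add_neg_cancel _)

theorem _root_.IsCap.thirdPoint_anchor_ne (hS : IsCap S) (hcard : #S = 20) {x : Fin 4 → ZMod 3}
    (hx : x ∈ S) : thirdPoint (anchor S) x ≠ x :=
  fun h ↦ hS.anchor_notMem hcard (thirdPoint_eq_right_iff.1 h ▸ hx)

theorem eq_seven_of_erase_eq : ∀ r : ZMod 3 → ℕ, (∀ k, r k ≤ 9) → ∑ k, r k = 21 →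
    (∀ i, ∃ p q, p ≠ q ∧ r p - (if i = p then 1 else 0) = r q - (if i = q then 1 else 0)) →
    ∀ k, r k = 7 := by
  rw [forall_bounded_iff]
  decide +kernel

theorem _root_.IsCap.card_level_eq_seven (hS : IsCap S) (hcard : #S = 21) (hf : f ≠ 0)
    (k : ZMod 3) : #(level S f k) = 7 := by
  have hsum := (sum_card_level S f).trans hcard
  have hle := hS.card_level_le_nine hf
  refine eq_seven_of_erase_eq _ hle hsum (fun i ↦ ?_) k
  have hpos : 0 < #(level S f i) := by
    have := sum_le_card_nsmul (univ.erase i) _ 9 fun k _ ↦ hle k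
    rw [← add_sum_erase _ _ (mem_univ i)] at hsum
    rw [card_erase_of_mem (mem_univ i), card_univ, ZMod.card] at this
    lia
  obtain ⟨x, hx⟩ := card_pos.1 hpos
  obtain ⟨hxS, hfx⟩ := mem_level.1 hx
  obtain ⟨p, q, hpq, heq⟩ := (hS.mono (erase_subset x S)).exists_card_level_eq
    (by rw [card_erase_of_mem hxS, hcard]) hf
  rw [card_level_erase hxS, card_level_erase hxS, hfx] at heq
  exact ⟨p, q, hpq, heq⟩

theorem _root_.IsCap.card_le_twenty (hS : IsCap S) : #S ≤ 20 := by
  by_contra! hcard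
  obtain ⟨T, hTS, hT⟩ := exists_subset_card_eq hcard
  have hcap := hS.mono hTS
  obtain ⟨x, hx⟩ := card_pos.1 (by lia : 0 < #T)
  have huniv : T = univ := by
    refine eq_univ_of_forall fun y ↦ mem_of_forall_card_level_eq (K := ZMod 3) (fun f ↦ ?_) hx
    obtain rfl | hf := eq_or_ne f 0
    · rfl
    · rw [hcap.card_level_eq_seven hT hf, hcap.card_level_eq_seven hT hf]
  rw [huniv, card_univ] at hT
  revert hT
  decide

/-- The elliptic quadratic form `x₀² + x₁² + x₂x₃` on `𝔽₃⁴`. It vanishes identically on no plane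
through the origin, which makes its nonzero zeros a cap. -/
def ellipticForm (x : Fin 4 → ZMod 3) : ZMod 3 :=
  x 0 ^ 2 + x 1 ^ 2 + x 2 * x 3

theorem eq_or_add_eq_zero_of_ellipticForm_eq_zero : ∀ x y : Fin 4 → ZMod 3, ellipticForm x = 0 →
    ellipticForm y = 0 → ellipticForm (x + y) = 0 → x = 0 ∨ y = 0 ∨ x = y ∨ x + y = 0 := by
  decide +kernel

theorem ellipticForm_neg (x : Fin 4 → ZMod 3) : ellipticForm (-x) = ellipticForm x := by
  simp [ellipticForm]

/-- The nonzero zeros of the elliptic quadratic form, a cap of the largest possible size. -/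
def ellipticCap : Finset (Fin 4 → ZMod 3) :=
  {x | x ≠ 0 ∧ ellipticForm x = 0}

theorem card_ellipticCap : #ellipticCap = 20 := by
  decide +kernel

theorem isCap_ellipticCap : IsCap ellipticCap := by
  intro x hx y hy z hz hxy _ _ hsum
  obtain rfl := neg_eq_of_add_eq_zero_right hsum
  simp only [ellipticCap, mem_filter, mem_univ, true_and, ellipticForm_neg, neg_ne_zero] at hx hy hz
  obtain h | h | h | h := eq_or_add_eq_zero_of_ellipticForm_eq_zero x y hx.2 hy.2 hz.2
  · exact hx.1 h
  · exact hy.1 h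
  · exact hxy h
  · exact hz.1 h

theorem _root_.MaximalCap.card_eq_twenty (hS : MaximalCap S) : #S = 20 :=
  hS.1.card_le_twenty.antisymm (card_ellipticCap ▸ hS.2 _ isCap_ellipticCap)

end FourSpace

end Caps

end AffineCap

/-- Every maximal cap `S` in `AG(4,3)` has an anchor point `a = -∑ x ∈ S, x`: the point
`a` is not in `S`, every `x ∈ S` pairs with the point `-(a + x) ∈ S` (distinct from `x`)
to form a line through `a`, and `a` is the unique point with this property. -/
theorem maximal_cap_AG43_anchor
    (S : Finset (Fin 4 → ZMod 3)) (hS : MaximalCap S) :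
    (-∑ x ∈ S, x) ∉ S ∧
    (∀ x ∈ S, (-((-∑ y ∈ S, y) + x)) ∈ S ∧ (-((-∑ y ∈ S, y) + x)) ≠ x) ∧
    (∀ b : Fin 4 → ZMod 3,
      (b ∉ S ∧ ∀ x ∈ S, (-(b + x)) ∈ S ∧ (-(b + x)) ≠ x) → b = -∑ x ∈ S, x) := by
  have hcard := hS.card_eq_twenty
  exact ⟨hS.1.anchor_notMem hcard,
    fun x hx ↦ ⟨hS.1.thirdPoint_anchor_mem hcard hx, hS.1.thirdPoint_anchor_ne hcard hx⟩,
    fun b hb ↦ AffineCap.eq_anchor_of_forall_thirdPoint_mem (by rw [hcard]; rfl)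
      fun x hx ↦ (hb.2 x hx).1⟩
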